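/- The map Δ : V⁴ → S₂(Λ²V) given by Δ(w, x, y, z) = (w ∧ x)(y ∧ z) + (w ∧ y)(z ∧ x) + (w ∧ z)(x ∧ y), where V is a 4-dimensional vector space over a field of characteristic 2, is multilinear and alternating in its four arguments. -/

import Mathlib

open Module

/-- The wedge `v ∧ w` as an element of the second exterior power `⋀[𝔽]^2 V`. -/
noncomputable def wedge2 (𝔽 : Type*) {V : Type*} [Field 𝔽] [AddCommGroup V] [Module 𝔽 V]
    (v w : V) : ⋀[𝔽]^2 V :=
  ⟨ExteriorAlgebra.ιMulti 𝔽 2 ![v, w],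
   ExteriorAlgebra.ιMulti_range 𝔽 2 (Set.mem_range_self _)⟩

/-- The wedge `v₁ ∧ v₂ ∧ v₃ ∧ v₄` as an element of the fourth exterior power `⋀[𝔽]^4 V`. -/
noncomputable def wedge4 (𝔽 : Type*) {V : Type*} [Field 𝔽] [AddCommGroup V] [Module 𝔽 V]
    (v₁ v₂ v₃ v₄ : V) : ⋀[𝔽]^4 V :=
  ⟨ExteriorAlgebra.ιMulti 𝔽 4 ![v₁, v₂, v₃, v₄],
   ExteriorAlgebra.ιMulti_range 𝔽 4 (Set.mem_range_self _)⟩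

/-- The wedge product `⋀[𝔽]^2 V × ⋀[𝔽]^2 V → ⋀[𝔽]^4 V`. -/
noncomputable def wmul {𝔽 V : Type*} [Field 𝔽] [AddCommGroup V] [Module 𝔽 V]
    (a b : ⋀[𝔽]^2 V) : ⋀[𝔽]^4 V :=
  ⟨a.1 * b.1, by
    have h : (⋀[𝔽]^4 V) = ⋀[𝔽]^2 V * ⋀[𝔽]^2 V := by
      rw [show (4 : ℕ) = 2 + 2 by norm_num]
      exact pow_add _ 2 2
    exact h ▸ Submodule.mul_mem_mul a.2 b.2⟩

/-- The relation submodule defining the symmetric square. -/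
def symRel (𝔽 W : Type*) [Field 𝔽] [AddCommGroup W] [Module 𝔽 W] :
    Submodule 𝔽 (TensorProduct 𝔽 W W) :=
  Submodule.span 𝔽 {x | ∃ v w : W, x = v ⊗ₜ[𝔽] w - w ⊗ₜ[𝔽] v}

/-- The symmetric square `S₂(W) = (W ⊗ W)/⟨v⊗w − w⊗v⟩`. -/
abbrev SymSq (𝔽 W : Type*) [Field 𝔽] [AddCommGroup W] [Module 𝔽 W] :=
  TensorProduct 𝔽 W W ⧸ symRel 𝔽 W

/-- The symmetric product `vw ∈ S₂(W)`. -/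
noncomputable def symMul (𝔽 : Type*) {W : Type*} [Field 𝔽] [AddCommGroup W] [Module 𝔽 W] (v w : W) :
    SymSq 𝔽 W :=
  Submodule.Quotient.mk (v ⊗ₜ[𝔽] w)

/-- The square `w² ∈ S₂(W)`. -/
noncomputable def sqS (𝔽 : Type*) {W : Type*} [Field 𝔽] [AddCommGroup W] [Module 𝔽 W] (w : W) : SymSq 𝔽 W :=
  symMul 𝔽 w w

/-- The element `U(w,x,y,z) = (w∧x)(y∧z) + (w∧y)(z∧x) + (w∧z)(x∧y) ∈ S₂(Λ²V)`. -/
noncomputable def Udef (𝔽 : Type*) {V : Type*} [Field 𝔽] [AddCommGroup V] [Module 𝔽 V]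
    (w x y z : V) : SymSq 𝔽 (⋀[𝔽]^2 V) :=
  symMul 𝔽 (wedge2 𝔽 w x) (wedge2 𝔽 y z) + symMul 𝔽 (wedge2 𝔽 w y) (wedge2 𝔽 z x) +
    symMul 𝔽 (wedge2 𝔽 w z) (wedge2 𝔽 x y)

/-!
The expression `Δ` is the Pfaffian `ω₀₁ω₂₃ + ω₀₂ω₃₁ + ω₀₃ω₁₂` of an alternating bilinear map `ω`, with
entries multiplied by a symmetric bilinear map. It is invariant under a 3-cycle and under
`(0 2)(1 3)`; these generate `A₄`, which is transitive on pairs of arguments, so vanishing when the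
first two arguments agree already gives vanishing when any two agree.
-/

section Pfaffian

variable {R V W M : Type*} [CommSemiring R] [AddCommMonoid V] [Module R V]
  [AddCommGroup W] [Module R W] [AddCommGroup M] [Module R M]

/-- The Pfaffian of the `4 × 4` alternating matrix with entries `ω vᵢ vⱼ`, where `ω` is a `W`-valued
bilinear map and products of entries are taken with the bilinear map `B`. The middle term is
`ω w y · ω z x` rather than `-ω w y · ω x z`, so that all signs are positive. -/
def pfaffianFour (B : W →ₗ[R] W →ₗ[R] M) (ω : V →ₗ[R] V →ₗ[R] W) (w x y z : V) : M :=
  B (ω w x) (ω y z) + B (ω w y) (ω z x) + B (ω w z) (ω x y)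

variable {B : W →ₗ[R] W →ₗ[R] M} {ω : V →ₗ[R] V →ₗ[R] W}

theorem pfaffianFour_cycle (w x y z : V) :
    pfaffianFour B ω w x y z = pfaffianFour B ω w y z x := by
  simp only [pfaffianFour]
  abel

theorem pfaffianFour_swap_pairs (hB : ∀ a b, B a b = B b a) (hω : ω.IsAlt) (w x y z : V) :
    pfaffianFour B ω w x y z = pfaffianFour B ω y z w x := by
  have h₂ : B (ω w y) (ω z x) = B (ω y w) (ω x z) := by
    rw [← hω.neg w y, ← hω.neg z x, LinearMap.map_neg₂, map_neg, neg_neg]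
  have h₃ : B (ω w z) (ω x y) = B (ω y x) (ω z w) := by
    rw [hB, ← hω.neg x y, ← hω.neg w z, LinearMap.map_neg₂, map_neg, neg_neg]
  rw [pfaffianFour, pfaffianFour, hB (ω w x), h₂, h₃]

theorem pfaffianFour_self_left (hB : ∀ a b, B a b = B b a) (hω : ω.IsAlt) (w y z : V) :
    pfaffianFour B ω w w y z = 0 := by
  rw [pfaffianFour, hω w, LinearMap.map_zero₂, zero_add, hB (ω w z), ← map_add, ← hω.neg w z,
    neg_add_cancel, map_zero]

theorem pfaffianFour_eq_zero_of_eq (hB : ∀ a b, B a b = B b a) (hω : ω.IsAlt) (v : Fin 4 → V)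
    {i j : Fin 4} (hv : v i = v j) (hij : i ≠ j) :
    pfaffianFour B ω (v 0) (v 1) (v 2) (v 3) = 0 := by
  have h01 := pfaffianFour_self_left hB hω
  have h02 (w x z : V) : pfaffianFour B ω w x w z = 0 := by rw [pfaffianFour_cycle, h01]
  have h03 (w x y : V) : pfaffianFour B ω w x y w = 0 := by rw [pfaffianFour_cycle, h02]
  have h23 (w x y : V) : pfaffianFour B ω w x y y = 0 := by
    rw [pfaffianFour_swap_pairs hB hω, h01]
  have h13 (w x y : V) : pfaffianFour B ω w x y x = 0 := by rw [pfaffianFour_cycle, h23]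
  have h12 (w x z : V) : pfaffianFour B ω w x x z = 0 := by rw [pfaffianFour_cycle, h13]
  fin_cases i <;> fin_cases j <;> simp_all

/-- `pfaffianFour` as an alternating map, for a symmetric product `B` and an alternating `ω`. -/
def pfaffianFourAlternating (B : W →ₗ[R] W →ₗ[R] M) (hB : ∀ a b, B a b = B b a)
    (ω : V →ₗ[R] V →ₗ[R] W) (hω : ω.IsAlt) : V [⋀^Fin 4]→ₗ[R] M where
  toMultilinearMap := MultilinearMap.mk' (fun v => pfaffianFour B ω (v 0) (v 1) (v 2) (v 3))
    (fun v i a b => by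
      fin_cases i <;>
        simp only [pfaffianFour, Fin.zero_eta, Fin.mk_one, Fin.reduceFinMk, Function.update_self,
          Function.update_of_ne, ne_eq, Fin.reduceEq, zero_ne_one, one_ne_zero,
          not_false_eq_true, map_add, LinearMap.add_apply] <;>
        abel)
    (fun v i c a => by fin_cases i <;> simp [pfaffianFour])
  map_eq_zero_of_eq' v _ _ := pfaffianFour_eq_zero_of_eq hB hω v

end Pfaffian

section ExteriorSquare

variable (𝔽 : Type*) {V : Type*} [Field 𝔽] [AddCommGroup V] [Module 𝔽 V]

theorem coe_wedge2 (v w : V) :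
    (wedge2 𝔽 v w : ExteriorAlgebra 𝔽 V) = ExteriorAlgebra.ι 𝔽 v * ExteriorAlgebra.ι 𝔽 w := by
  simp [wedge2, ExteriorAlgebra.ιMulti_apply]

variable (V)

/-- `wedge2` as a bilinear map. -/
noncomputable def wedge2Bilin : V →ₗ[𝔽] V →ₗ[𝔽] ⋀[𝔽]^2 V :=
  LinearMap.mk₂ 𝔽 (wedge2 𝔽)
    (fun _ _ _ => Subtype.ext <| by simp [coe_wedge2, add_mul])
    (fun _ _ _ => Subtype.ext <| by simp [coe_wedge2])
    (fun _ _ _ => Subtype.ext <| by simp [coe_wedge2, mul_add])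
    (fun _ _ _ => Subtype.ext <| by simp [coe_wedge2])

theorem wedge2Bilin_isAlt : (wedge2Bilin 𝔽 V).IsAlt := fun v =>
  Subtype.ext <| (coe_wedge2 𝔽 v v).trans (ExteriorAlgebra.ι_sq_zero v)

end ExteriorSquare

section SymmetricSquare

variable (𝔽 W : Type*) [Field 𝔽] [AddCommGroup W] [Module 𝔽 W]

/-- `symMul` as a bilinear map. -/
noncomputable def symMulBilin : W →ₗ[𝔽] W →ₗ[𝔽] SymSq 𝔽 W :=
  (TensorProduct.mk 𝔽 W W).compr₂ (symRel 𝔽 W).mkQ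

theorem symMulBilin_comm (a b : W) : symMulBilin 𝔽 W a b = symMulBilin 𝔽 W b a :=
  (Submodule.Quotient.eq _).2 (Submodule.subset_span ⟨a, b, rfl⟩)

end SymmetricSquare

theorem Udef_eq_pfaffianFour (𝔽 : Type*) {V : Type*} [Field 𝔽] [AddCommGroup V] [Module 𝔽 V]
    (w x y z : V) :
    Udef 𝔽 w x y z = pfaffianFour (symMulBilin 𝔽 (⋀[𝔽]^2 V)) (wedge2Bilin 𝔽 V) w x y z :=
  rfl

theorem Udef_multilinear_alternating_general {𝔽 V : Type*} [Field 𝔽] [AddCommGroup V]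
    [Module 𝔽 V] :
    ∃ A : V [⋀^Fin 4]→ₗ[𝔽] SymSq 𝔽 (⋀[𝔽]^2 V),
      ∀ w x y z : V, A ![w, x, y, z] = Udef 𝔽 w x y z :=
  ⟨pfaffianFourAlternating (symMulBilin 𝔽 (⋀[𝔽]^2 V)) (symMulBilin_comm 𝔽 _)
    (wedge2Bilin 𝔽 V) (wedge2Bilin_isAlt 𝔽 V), fun w x y z => (Udef_eq_pfaffianFour 𝔽 w x y z).symm⟩

/-- the map `Δ(w,x,y,z) = (w∧x)(y∧z) + (w∧y)(z∧x) + (w∧z)(x∧y)` into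
`S₂(Λ²V)` is 4-linear and alternating (for `dim V = 4` in characteristic 2), i.e. it is
given by an alternating map. -/
theorem Udef_multilinear_alternating {𝔽 V : Type*} [Field 𝔽] [CharP 𝔽 2]
    [AddCommGroup V] [Module 𝔽 V] [FiniteDimensional 𝔽 V] (hV : Module.finrank 𝔽 V = 4) :
    ∃ A : V [⋀^Fin 4]→ₗ[𝔽] SymSq 𝔽 (⋀[𝔽]^2 V),
      ∀ w x y z : V, A ![w, x, y, z] = Udef 𝔽 w x y z := by
  exact Udef_multilinear_alternating_general
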